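/- arXiv:1204.2932 — 3 statements merged into one kernel-verified Lean document; each statement's English description precedes it below -/
import Mathlib

section
/- Let Q be a finite type with |Q| = n ≥ 1, let δ : Q → Bool → Q be a transition function, and let t ∈ Q be a sink (δ t b = t for both b ∈ Bool). Suppose that for every state q ∈ Q there exists a word w_q ∈ List Bool with |w_q| ≤ n − 1 and δ*(q, w_q) = t. Then there exists a single word w ∈ List Bool with |w| ≤ (n − 1)² such that δ*(q, w) = t for every q ∈ Q. -/
/-- The state reached from `q` by reading the word `w` letter by letter. -/
def runDFA {Q : Type*} (δ : Q → Bool → Q) (q : Q) (w : List Bool) : Q :=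
  w.foldl δ q

/-!
Bring the states to the sink one at a time: once a word `u` sends some of them to the sink, they
stay there, so `u` may be prolonged by a word leading the current image of the next state to the
sink. The sink itself costs nothing, which leaves `n - 1` rounds of at most `n - 1` letters.
-/

section

variable {Q α : Type*} {δ : Q → α → Q} {t : Q} {k : ℕ}

theorem exists_length_le_card_mul_forall_mem_foldl_eq (hsink : ∀ a, δ t a = t)
    (hreach : ∀ q, ∃ w : List α, w.length ≤ k ∧ w.foldl δ q = t) (S : Finset Q) :
    ∃ w : List α, w.length ≤ S.card * k ∧ ∀ q ∈ S, w.foldl δ q = t := by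
  induction S using Finset.cons_induction with
  | empty => exact ⟨[], by simp⟩
  | cons p S hp ih =>
    obtain ⟨u, hu_length, hu⟩ := ih
    obtain ⟨v, hv_length, hv⟩ := hreach (u.foldl δ p)
    refine ⟨u ++ v, ?_, (Finset.forall_mem_cons hp _).mpr ⟨?_, fun q hq => ?_⟩⟩
    · rw [List.length_append, Finset.card_cons, Nat.succ_mul]
      exact Nat.add_le_add hu_length hv_length
    · rw [List.foldl_append, hv]
    · rw [List.foldl_append, hu q hq, List.foldl_fixed' hsink]

theorem synchronizing_word_to_sink_general [DecidableEq Q] (hsink : ∀ a, δ t a = t)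
    (hreach : ∀ q, ∃ w : List α, w.length ≤ k ∧ w.foldl δ q = t) (S : Finset Q) :
    ∃ w : List α, w.length ≤ (S.erase t).card * k ∧ ∀ q ∈ S, w.foldl δ q = t := by
  obtain ⟨w, hw_length, hw⟩ :=
    exists_length_le_card_mul_forall_mem_foldl_eq hsink hreach (S.erase t)
  refine ⟨w, hw_length, fun q hq => ?_⟩
  obtain rfl | hqt := eq_or_ne q t
  · exact List.foldl_fixed' hsink w
  · exact hw q (Finset.mem_erase.mpr ⟨hqt, hq⟩)

end

/-- If every state of an `n`-state automaton can reach the sink `t` by some word of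
length at most `n - 1`, then there is a single word of length at most `(n-1)²` that
leads every state to `t`. -/
theorem synchronizing_word_to_sink {Q : Type*} [Fintype Q]
    (δ : Q → Bool → Q) (t : Q) (n : ℕ) (hn : Fintype.card Q = n) (hn1 : 1 ≤ n)
    (hsink : ∀ b : Bool, δ t b = t)
    (hreach : ∀ q : Q, ∃ w : List Bool, w.length ≤ n - 1 ∧ runDFA δ q w = t) :
    ∃ w : List Bool, w.length ≤ (n - 1) ^ 2 ∧ ∀ q : Q, runDFA δ q w = t := by
  classical
  simpa [runDFA, hn, sq] using synchronizing_word_to_sink_general hsink hreach Finset.univ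
end

section
/- Let s₀ be a finite binary word and let u₁, …, u_j (j ≥ 1) be nonempty finite binary words, and set K = |u₁| + ⋯ + |u_j|. Then there exists a finite binary word s having s₀ as a prefix such that |s| ≤ |s₀| + 1 + log₂ K (logarithm base 2, real-valued) and s is not an infix of u_i^ω for any 1 ≤ i ≤ j. -/
/-- The finite binary word `w` occurs in the infinite binary sequence `x` at position `i`. -/
def occursAt (w : List Bool) (x : ℕ → Bool) (i : ℕ) : Prop :=
  ∀ k : Fin w.length, x (i + k.val) = w.get k

/-- The periodic infinite binary sequence `u^ω` determined by a finite binary word `u`: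
`u^ω(i) = u(i mod |u|)`. -/
def periodicSeq (u : List Bool) : ℕ → Bool :=
  fun i => u.getD (i % u.length) false

/-!
A sequence of period `c` has at most `c` factors of each length, one for each starting position
modulo `c`. If the periods of finitely many sequences sum to less than `2 ^ n`, some word `t` of
length `n` is therefore a factor of none of them, and then neither is any word ending in `t`.
-/

theorem periodicSeq_periodic (u : List Bool) : Function.Periodic (periodicSeq u) u.length := by
  intro i
  simp only [periodicSeq, Nat.add_mod_right]

theorem occursAt_ofFn {n : ℕ} {f : Fin n → Bool} {x : ℕ → Bool} {i : ℕ} :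
    occursAt (List.ofFn f) x i ↔ (fun k : Fin n => x (i + k)) = f := by
  simp [occursAt, funext_iff, Fin.forall_iff]

theorem occursAt.of_append_right {s t : List Bool} {x : ℕ → Bool} {i : ℕ}
    (h : occursAt (s ++ t) x i) : occursAt t x (i + s.length) := by
  intro k
  simpa [add_assoc] using h ⟨s.length + k, by simp⟩

theorem occursAt_mod_iff {x : ℕ → Bool} {c : ℕ} (hx : Function.Periodic x c)
    {w : List Bool} {i : ℕ} : occursAt w x (i % c) ↔ occursAt w x i := by
  have shift_mod (k : ℕ) : x (i % c + k) = x (i + k) := by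
    rw [← hx.map_mod_nat (i % c + k), Nat.mod_add_mod, hx.map_mod_nat]
  simp only [occursAt, shift_mod]

theorem exists_length_eq_and_forall_not_occursAt {ι : Type*} [Fintype ι] (x : ι → ℕ → Bool)
    (p : ι → ℕ) {n : ℕ} (hn : Fintype.card ι < 2 ^ n) :
    ∃ t : List Bool, t.length = n ∧ ∀ q, ¬ occursAt t (x q) (p q) := by
  let factor (q : ι) (k : Fin n) : Bool := x q (p q + k)
  have not_surjective : ¬ Function.Surjective factor := fun h =>
    (Fintype.card_le_of_surjective factor h).not_gt (by simpa using hn)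
  obtain ⟨f, hf⟩ := not_forall.mp not_surjective
  exact ⟨List.ofFn f, List.length_ofFn, fun q hq => hf ⟨q, occursAt_ofFn.mp hq⟩⟩

theorem exists_length_eq_and_forall_not_occursAt_of_periodic {ι : Type*} [Fintype ι]
    {x : ι → ℕ → Bool} {c : ι → ℕ} (hx : ∀ i, Function.Periodic (x i) (c i))
    (hc : ∀ i, 0 < c i) {n : ℕ} (hn : ∑ i, c i < 2 ^ n) :
    ∃ t : List Bool, t.length = n ∧ ∀ i pos, ¬ occursAt t (x i) pos := by
  have hcard : Fintype.card (Σ i, Fin (c i)) < 2 ^ n := by simpa using hn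
  obtain ⟨t, ht, avoids⟩ := exists_length_eq_and_forall_not_occursAt
    (fun q : Σ i, Fin (c i) => x q.1) (fun q => q.2) hcard
  exact ⟨t, ht, fun i pos hpos =>
    avoids ⟨i, pos % c i, Nat.mod_lt pos (hc i)⟩ ((occursAt_mod_iff (hx i)).mpr hpos)⟩

/-- Given a word `s₀` and nonempty words `u₁, …, u_j` of total length `K`, there is an
extension `s` of `s₀` of length at most `|s₀| + 1 + log₂ K` that is an infix of no
periodic sequence `u_i^ω`. -/
theorem exists_spoiler_extension (s₀ : List Bool) (j : ℕ) (hj : 1 ≤ j)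
    (u : Fin j → List Bool) (hu : ∀ i, u i ≠ []) (K : ℕ)
    (hK : K = ∑ i, (u i).length) :
    ∃ s : List Bool, s₀ <+: s ∧
      (s.length : ℝ) ≤ s₀.length + 1 + Real.logb 2 K ∧
      ∀ i : Fin j, ¬ ∃ pos : ℕ, occursAt s (periodicSeq (u i)) pos := by
  have hn : ∑ i, (u i).length < 2 ^ (Nat.log 2 K + 1) :=
    hK ▸ Nat.lt_pow_succ_log_self one_lt_two K
  obtain ⟨t, ht, avoids⟩ := exists_length_eq_and_forall_not_occursAt_of_periodic
    (fun i => periodicSeq_periodic (u i)) (fun i => List.length_pos_iff.mpr (hu i)) hn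
  refine ⟨s₀ ++ t, List.prefix_append s₀ t, ?_,
    fun i ⟨_, hpos⟩ => avoids i _ hpos.of_append_right⟩
  calc ((s₀ ++ t).length : ℝ) = s₀.length + 1 + Nat.log 2 K := by
        rw [List.length_append, ht]
        push_cast
        ring
    _ ≤ s₀.length + 1 + Real.logb 2 K := by
        gcongr
        exact_mod_cast Real.natLog_le_logb K 2
end

section
/- Let Q be a finite type with |Q| = n ≥ 1, let δ : Q → (Bool × Bool) → Q be a transition function, and let t ∈ Q be absorbing (δ t x = t for all x). Suppose that for every state q ∈ Q and every adversary sequence s : Fin n → Bool there exists a coin sequence c : Fin n → Bool such that reading the word of pairs (s 0, c 0), (s 1, c 1), …, (s (n−1), c (n−1)) from q ends in t. Then there exist N ≤ n² and a function ρ : (Fin N → Bool) → (Fin N → Bool) such that for every q ∈ Q and every adversary sequence s : Fin N → Bool, reading the word of pairs (s 0, (ρ s) 0), …, (s (N−1), (ρ s) (N−1)) from q ends in t. -/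
/-- The state reached from `q` by reading a word over `Bool × Bool`
(adversary action, coin outcome) letter by letter. -/
def runMDP {Q : Type*} (δ : Q → (Bool × Bool) → Q) (q : Q) (w : List (Bool × Bool)) : Q :=
  w.foldl δ q

/-!
Treat the states one after the other. Once a coin word drives the states treated so far to `t`,
look at where that word takes the next state, and append a block of coins driving this successor
to `t`; the earlier states stay at `t` because `t` is absorbing.
-/

section

variable {Q A B : Type*} {δ : Q → A × B → Q} {t : Q} {S : Finset Q} {M N : ℕ}

/-- Simultaneous steering: against every adversary word of length `N`, a single coin word leads
all states of `S` to `t`. The coin word is chosen with the entire adversary word known, and is the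
same for all states of `S`. -/
def SteersTo (δ : Q → A × B → Q) (t : Q) (N : ℕ) (S : Finset Q) : Prop :=
  ∀ s : Fin N → A, ∃ c : Fin N → B, ∀ q ∈ S,
    ((List.finRange N).map fun i => (s i, c i)).foldl δ q = t

theorem map_finRange_add {γ : Type*} (f : Fin (M + N) → γ) :
    (List.finRange (M + N)).map f =
      (List.finRange M).map (fun i => f (i.castAdd N)) ++
        (List.finRange N).map (fun i => f (i.natAdd M)) := by
  rw [← List.ofFn_eq_map, ← List.ofFn_eq_map, ← List.ofFn_eq_map, List.ofFn_add]
  rfl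

namespace SteersTo

theorem empty : SteersTo δ t 0 ∅ :=
  fun _ => ⟨Fin.elim0, by simp⟩

theorem insert [DecidableEq Q] (habs : ∀ x, δ t x = t) (hS : SteersTo δ t M S)
    (hreach : ∀ q, SteersTo δ t N {q}) (p : Q) : SteersTo δ t (M + N) (insert p S) := by
  intro s
  obtain ⟨c, hc⟩ := hS fun i => s (i.castAdd N)
  let p' := ((List.finRange M).map fun i => (s (i.castAdd N), c i)).foldl δ p
  obtain ⟨d, hd⟩ := hreach p' fun i => s (i.natAdd M)
  refine ⟨Fin.append c d, fun q hq => ?_⟩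
  simp only [map_finRange_add, Fin.append_left, Fin.append_right, List.foldl_append]
  rcases Finset.mem_insert.mp hq with rfl | hqS
  · exact hd p' (Finset.mem_singleton_self p')
  · rw [hc q hqS, List.foldl_fixed' habs]

theorem of_forall_singleton (habs : ∀ x, δ t x = t) (hreach : ∀ q, SteersTo δ t N {q})
    (S : Finset Q) : SteersTo δ t (S.card * N) S := by
  classical
  induction S using Finset.induction_on with
  | empty => simpa only [Finset.card_empty, Nat.zero_mul] using empty
  | insert p S hp ih =>
    rw [Finset.card_insert_of_notMem hp, Nat.succ_mul]
    exact ih.insert habs hreach p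

end SteersTo

theorem exists_response_leading_to_top_general (δ : Q → A × B → Q) (t : Q) (m : ℕ)
    (habs : ∀ x, δ t x = t)
    (hreach : ∀ (q : Q) (s : Fin m → A), ∃ c : Fin m → B,
      ((List.finRange m).map fun i => (s i, c i)).foldl δ q = t)
    (S : Finset Q) :
    ∃ ρ : (Fin (S.card * m) → A) → (Fin (S.card * m) → B),
      ∀ q ∈ S, ∀ s : Fin (S.card * m) → A,
        ((List.finRange (S.card * m)).map fun i => (s i, ρ s i)).foldl δ q = t := by
  have hsingle (q : Q) : SteersTo δ t m {q} := by
    simpa only [SteersTo, Finset.mem_singleton, forall_eq] using hreach q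
  choose ρ hρ using SteersTo.of_forall_singleton habs hsingle S
  exact ⟨ρ, fun q hq s => hρ s q hq⟩

end

/-- If for every state `q` of an `n`-state system and every adversary sequence of
length `n` there is a coin sequence of length `n` leading `q` to the absorbing state `t`,
then there are `N ≤ n²` and a single response `ρ` of length `N` leading every state to `t`
against every adversary sequence of length `N`. -/
theorem exists_response_leading_to_top {Q : Type*} [Fintype Q]
    (δ : Q → (Bool × Bool) → Q) (t : Q) (n : ℕ) (hn : Fintype.card Q = n) (hn1 : 1 ≤ n)
    (habs : ∀ x : Bool × Bool, δ t x = t)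
    (hreach : ∀ (q : Q) (s : Fin n → Bool), ∃ c : Fin n → Bool,
      runMDP δ q ((List.finRange n).map fun i => (s i, c i)) = t) :
    ∃ N : ℕ, N ≤ n ^ 2 ∧ ∃ ρ : (Fin N → Bool) → (Fin N → Bool),
      ∀ (q : Q) (s : Fin N → Bool),
        runMDP δ q ((List.finRange N).map fun i => (s i, ρ s i)) = t := by
  obtain ⟨ρ, hρ⟩ := exists_response_leading_to_top_general δ t n habs hreach Finset.univ
  exact ⟨_, by rw [Finset.card_univ, hn, sq], ρ, fun q => hρ q (Finset.mem_univ q)⟩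
end
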